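/- arXiv:2106.11408 — 5 statements merged into one kernel-verified Lean document; each statement's English description precedes it below -/
import Mathlib

section
/- Suppose all the stopping-point equations of the DAGP algorithm hold. That is, there exist vectors x^v, z^v, g^v, h^v ∈ ℝ^m for v = 1,…,M such that: (i) z^v = x^v − Σ_{u=1}^M w_{vu} x^u − μ(∇f_v(x^v) − g^v) for all v; (ii) x^v ∈ S_v and ⟨y − x^v, z^v − x^v⟩ ≤ 0 for all y ∈ S_v (i.e. x^v is the Euclidean projection of z^v onto S_v); (iii) ρ[∇f_v(x^v) − g^v + (1/μ)(z^v − x^v)] + α(h^v − g^v) = 0 for all v; (iv) Σ_{u=1}^M q_{vu}(h^u − g^u) = 0 for all v; and (v) Σ_{v=1}^M h^v = 0. Then there exists x* ∈ ℝ^m such that x^v = x* for every v (consensus), x* ∈ ∩_{v=1}^M S_v, the vector n^v := g^v − ∇f_v(x*) belongs to the normal cone ∂I_{S_v}(x*) for every v, and Σ_{v=1}^M (n^v + ∇f_v(x*)) = 0; in particular 0 ∈ Σ_{v=1}^M (∂I_{S_v}(x*) + ∇f_v(x*)), so x* satisfies the first-order optimality condition of the constrained problem min Σ_v f_v(x) subject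 to x ∈ ∩_v S_v. -/
open scoped InnerProductSpace

/-!
Write `W x` for the family `v ↦ ∑ u, W v u • x u` and `e = h - g`. Eliminating `z` from the
stationarity equations of the `z`- and `g`-updates cancels the gradients and makes `W x` a multiple
of `e`, so the `h`-update gives `Q (W x) = 0`. As `ker Q ⊆ ker Wᵀ`, this means `Wᵀ W x = 0`, that
is, `W x = 0`: consensus. Then `e = 0` as well, hence `∑ g = ∑ h = 0`, and `z - x = μ (g - ∇f(x))`,
so the projection inequality says that `g - ∇f(x)` is normal to `S` at `x`. The hypotheses on the
kernels concern scalar families; they carry over to vector-valued ones by applying linear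
functionals.
-/

open scoped Matrix

section VectorValued

variable {R E m n : Type*} [CommSemiring R] [AddCommMonoid E] [Module R E] [Fintype n]

theorem mulVec_dual_comp (A : Matrix m n R) (φ : Module.Dual R E) (x : n → E) :
    A *ᵥ (φ ∘ x) = φ ∘ fun i => ∑ j, A i j • x j := by
  ext i
  simp [Matrix.mulVec, dotProduct]

variable [Module.Projective R E]

theorem forall_sum_smul_eq_zero_iff_forall_dual {A : Matrix m n R} {x : n → E} :
    (∀ i, ∑ j, A i j • x j = 0) ↔ ∀ φ : Module.Dual R E, A *ᵥ (φ ∘ x) = 0 := by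
  simp only [mulVec_dual_comp, funext_iff, Function.comp_apply, Pi.zero_apply]
  rw [forall_comm]
  simp only [Module.forall_dual_apply_eq_zero_iff]

theorem exists_forall_eq_of_sum_smul_eq_zero {A : Matrix m n R}
    (hA : ∀ y : n → R, A *ᵥ y = 0 → ∃ c, y = fun _ => c) {x : n → E}
    (hx : ∀ i, ∑ j, A i j • x j = 0) : ∃ c, ∀ j, x j = c := by
  have hconst : ∀ i j, x i = x j := fun i j => Module.eval_apply_injective R <| by
    ext φ
    obtain ⟨c, hc⟩ := hA _ (forall_sum_smul_eq_zero_iff_forall_dual.mp hx φ)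
    exact (congrFun hc i).trans (congrFun hc j).symm
  cases isEmpty_or_nonempty n with
  | inl _ => exact ⟨0, isEmptyElim⟩
  | inr hn => exact hn.elim fun i => ⟨x i, fun j => hconst j i⟩

end VectorValued

theorem mulVec_eq_zero_of_mulVec_mulVec_eq_zero {R l m n : Type*} [Fintype m] [Fintype n]
    [NonUnitalRing R] [PartialOrder R] [StarRing R] [StarOrderedRing R] [NoZeroDivisors R]
    {A : Matrix m n R} {B : Matrix l m R} (hB : ∀ y : m → R, B *ᵥ y = 0 → Aᴴ *ᵥ y = 0)
    {y : n → R} (hy : B *ᵥ (A *ᵥ y) = 0) : A *ᵥ y = 0 := by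
  rw [← Matrix.conjTranspose_mul_self_mulVec_eq_zero, ← Matrix.mulVec_mulVec]
  exact hB _ hy

theorem sum_smul_eq_zero_of_sum_smul_sum_smul_eq_zero {R E l m n : Type*} [Fintype m] [Fintype n]
    [CommRing R] [PartialOrder R] [StarRing R] [StarOrderedRing R] [NoZeroDivisors R]
    [AddCommMonoid E] [Module R E] [Module.Projective R E] {A : Matrix m n R} {B : Matrix l m R}
    (hB : ∀ y : m → R, B *ᵥ y = 0 → Aᴴ *ᵥ y = 0) {x : n → E}
    (hx : ∀ i, ∑ j, B i j • ∑ k, A j k • x k = 0) (j : m) : ∑ k, A j k • x k = 0 := by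
  refine forall_sum_smul_eq_zero_iff_forall_dual.mpr (fun φ => ?_) j
  apply mulVec_eq_zero_of_mulVec_mulVec_eq_zero hB
  rw [mulVec_dual_comp]
  exact forall_sum_smul_eq_zero_iff_forall_dual.mp hx φ

/-- For node `v` of the algorithm, `w` is `∑ u, W v u • x u`, `d` is `∇f_v(x^v) - g^v` and `e` is
`h^v - g^v`. -/
theorem eq_smul_of_stationary {K E : Type*} [Field K] [AddCommGroup E] [Module K E]
    {μ ρ α : K} (hμ : μ ≠ 0) (hρ : ρ ≠ 0) {x z w d e : E} (hz : z = x - w - μ • d)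
    (hd : ρ • (d + μ⁻¹ • (z - x)) + α • e = 0) : w = (μ * α / ρ) • e := by
  have hcancel : d + μ⁻¹ • (z - x) = -(μ⁻¹ • w) := by
    subst hz
    match_scalars <;> field_simp <;> ring
  rw [hcancel, smul_neg, neg_add_eq_zero, smul_smul] at hd
  calc w = (μ / ρ) • (ρ * μ⁻¹) • w := by match_scalars; field_simp
    _ = (μ * α / ρ) • e := by rw [hd, smul_smul, div_mul_eq_mul_div]

section NormalCone

variable {E : Type*} [NormedAddCommGroup E] [InnerProductSpace ℝ E] {S : Set E} {x n : E}

/-- The normal cone `∂I_S(x)` to `S` at `x`, defined for an arbitrary set `S` and an arbitrary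
point `x` by the variational inequality that characterises it when `S` is convex and `x ∈ S`. -/
def normalCone (S : Set E) (x : E) : Set E :=
  {n | ∀ y ∈ S, ⟪n, y - x⟫_ℝ ≤ 0}

theorem mem_normalCone_iff : n ∈ normalCone S x ↔ ∀ y ∈ S, ⟪n, y - x⟫_ℝ ≤ 0 := Iff.rfl

theorem mem_normalCone_iff_inner_left : n ∈ normalCone S x ↔ ∀ y ∈ S, ⟪y - x, n⟫_ℝ ≤ 0 := by
  simp only [mem_normalCone_iff, real_inner_comm]

theorem smul_mem_normalCone_iff {μ : ℝ} (hμ : 0 < μ) :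
    μ • n ∈ normalCone S x ↔ n ∈ normalCone S x := by
  simp only [mem_normalCone_iff, real_inner_smul_left, ← smul_eq_mul,
    smul_nonpos_iff_nonpos_of_pos_left hμ]

end NormalCone

theorem dagp_stopping_point_optimal_general {V ι E : Type*} [Fintype V]
    [NormedAddCommGroup E] [InnerProductSpace ℝ E] [CompleteSpace E]
    (f : V → E → ℝ) (f' : V → E → E) (hdiff : ∀ v x, HasGradientAt (f v) (f' v x) x)
    (S : V → Set E) (W : Matrix V V ℝ) (Q : Matrix ι V ℝ)
    (hkerW : ∀ y : V → ℝ, W *ᵥ y = 0 → ∃ c : ℝ, y = fun _ => c)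
    (hkerQ : ∀ y : V → ℝ, Q *ᵥ y = 0 → Wᵀ *ᵥ y = 0)
    {μ ρ α : ℝ} (hμ : 0 < μ) (hρ : ρ ≠ 0) (hα : α ≠ 0) (x z g h : V → E)
    (hz : ∀ v, z v = x v - (∑ u, W v u • x u) - μ • (f' v (x v) - g v))
    (hxS : ∀ v, x v ∈ S v)
    (hproj : ∀ v, ∀ y ∈ S v, ⟪y - x v, z v - x v⟫_ℝ ≤ 0)
    (hg : ∀ v, ρ • (f' v (x v) - g v + μ⁻¹ • (z v - x v)) + α • (h v - g v) = 0)
    (hh : ∀ i, ∑ u, Q i u • (h u - g u) = 0)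
    (hsum : ∑ v, h v = 0) :
    ∃ xstar : E,
      (∀ v, x v = xstar) ∧
      (∀ v, xstar ∈ S v) ∧
      (∀ v, g v - f' v xstar ∈ normalCone (S v) xstar) ∧
      ∑ v, ((g v - f' v xstar) + f' v xstar) = 0 := by
  have hWx_eq : ∀ v, ∑ u, W v u • x u = (μ * α / ρ) • (h v - g v) := fun v =>
    eq_smul_of_stationary hμ.ne' hρ (hz v) (hg v)
  have hQWx : ∀ i, ∑ v, Q i v • ∑ u, W v u • x u = 0 := fun i => by
    simp only [hWx_eq, smul_comm _ (μ * α / ρ), ← Finset.smul_sum, hh, smul_zero]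
  have hWx : ∀ v, ∑ u, W v u • x u = 0 :=
    sum_smul_eq_zero_of_sum_smul_sum_smul_eq_zero
      (by simpa only [Matrix.conjTranspose_eq_transpose_of_trivial] using hkerQ) hQWx
  have hgh : ∀ v, g v = h v := fun v => by
    have hv := (hWx_eq v).symm.trans (hWx v)
    exact (sub_eq_zero.mp ((smul_eq_zero_iff_right (by positivity)).mp hv)).symm
  obtain ⟨xstar, hx⟩ := exists_forall_eq_of_sum_smul_eq_zero hkerW hWx
  refine ⟨xstar, hx, fun v => hx v ▸ hxS v, fun v => ?_, ?_⟩
  · have hzx : z v - x v = μ • (g v - f' v (x v)) := by rw [hz, hWx]; module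
    rw [← hx v, ← smul_mem_normalCone_iff hμ, ← hzx]
    exact mem_normalCone_iff_inner_left.mpr (hproj v)
  · simpa only [sub_add_cancel, hgh] using hsum

/-- Theorem 1 of the paper.
Any stopping point of the DAGP algorithm is a consensus point `x*` lying in the
intersection of the constraint sets, the vectors `n^v = g^v - ∇f_v(x*)` belong to the
normal cones `∂I_{S_v}(x*)`, and `∑_v (n^v + ∇f_v(x*)) = 0`, i.e. `x*` satisfies the
first-order optimality condition of `min ∑_v f_v` over `⋂_v S_v`. -/
theorem dagp_stopping_point_optimal (m M : ℕ)
    (f : Fin M → EuclideanSpace ℝ (Fin m) → ℝ)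
    (f' : Fin M → EuclideanSpace ℝ (Fin m) → EuclideanSpace ℝ (Fin m))
    (hdiff : ∀ v x, HasGradientAt (f v) (f' v x) x)
    (S : Fin M → Set (EuclideanSpace ℝ (Fin m)))
    (hSne : ∀ v, (S v).Nonempty) (hScl : ∀ v, IsClosed (S v))
    (hScv : ∀ v, Convex ℝ (S v))
    (W Q : Matrix (Fin M) (Fin M) ℝ)
    (hkerW : ∀ y : Fin M → ℝ, W.mulVec y = 0 ↔ ∃ c : ℝ, y = fun _ => c)
    (hkerQ : ∀ y : Fin M → ℝ, Q.mulVec y = 0 ↔ W.transpose.mulVec y = 0)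
    (μ ρ α : ℝ) (hμ : 0 < μ) (hρ : ρ ≠ 0) (hα : α ≠ 0)
    (x z g h : Fin M → EuclideanSpace ℝ (Fin m))
    -- (i) the `z`-update is stationary
    (hz : ∀ v, z v = x v - (∑ u, W v u • x u) - μ • (f' v (x v) - g v))
    -- (ii) `x^v` is the Euclidean projection of `z^v` onto `S_v`
    (hxS : ∀ v, x v ∈ S v)
    (hproj : ∀ v, ∀ y ∈ S v, ⟪y - x v, z v - x v⟫_ℝ ≤ 0)
    -- (iii) the `g`-update is stationary
    (hg : ∀ v, ρ • (f' v (x v) - g v + μ⁻¹ • (z v - x v)) + α • (h v - g v) = 0)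
    -- (iv) the `h`-update is stationary
    (hh : ∀ v, ∑ u, Q v u • (h u - g u) = 0)
    -- (v) the `h` variables sum to zero
    (hsum : ∑ v, h v = 0) :
    ∃ xstar : EuclideanSpace ℝ (Fin m),
      (∀ v, x v = xstar) ∧
      (∀ v, xstar ∈ S v) ∧
      (∀ v, ∀ y ∈ S v, ⟪g v - f' v xstar, y - xstar⟫_ℝ ≤ 0) ∧
      (∑ v, ((g v - f' v xstar) + f' v xstar) = 0) :=
  dagp_stopping_point_optimal_general f f' hdiff S W Q (fun y => (hkerW y).mp)
    (fun y => (hkerQ y).mp) hμ hρ hα x z g h hz hxS hproj hg hh hsum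
end

section
/- Fix a node v. Let f_v : ℝ^m → ℝ be convex and differentiable with L-Lipschitz gradient, let S_v ⊆ ℝ^m be a nonempty closed convex set, let x* ∈ S_v, and let n^v ∈ ∂I_{S_v}(x*). Let μ > 0, let x_n^1,…,x_n^M ∈ ℝ^m and g_n^v ∈ ℝ^m be arbitrary, set z_n^v := x_n^v − Σ_{u=1}^M w_{vu} x_n^u − μ(∇f_v(x_n^v) − g_n^v), and let x_{n+1}^v := P_{S_v}(z_n^v). Define F^v(w) := f_v(w) − f_v(x*) − ⟨∇f_v(x*), w − x*⟩ and T^v(w) := −⟨n^v, w − x*⟩. Then μ(F^v(x_{n+1}^v) + T^v(x_{n+1}^v)) − (Lμ/2)‖x_{n+1}^v − x_n^v‖² + ⟨x* − x_{n+1}^v, x_n^v − Σ_{u=1}^M w_{vu} x_n^u − x_{n+1}^v + μ(g_n^v − ∇f_v(x*) − n^v)⟩ ≤ 0. -/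
open scoped InnerProductSpace

/-!
Regrouping the inner products, the terms in `f' xstar` and `nv` cancel from the left-hand side,
which becomes, with `a = xnext`, `s = xstar` and `y = x v`,
`⟪s - a, z - a⟫ + μ (f a - f s - ⟪f' y, a - s⟫ - L / 2 * ‖a - y‖ ^ 2)`.
The first term is nonpositive because `a` is the projection of `z`. The second is nonpositive
because, relative to the tangent of `f` at `y`, convexity bounds `f s` from below and the descent
lemma for `L`-smooth functions bounds `f a` from above.
-/

section NormedSpace

open AffineMap Set

variable {E : Type*} [NormedAddCommGroup E] [NormedSpace ℝ E] {s : Set E} {f : E → ℝ} {x y z : E}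

theorem hasDerivWithinAt_comp_lineMap {f' : StrongDual ℝ E} {t : ℝ}
    (hf : HasFDerivWithinAt f f' s (lineMap x y t)) :
    HasDerivWithinAt (f ∘ lineMap x y) (f' (y - x)) (lineMap x y ⁻¹' s) t :=
  hf.comp_hasDerivWithinAt t hasDerivWithinAt_lineMap (mapsTo_preimage _ _)

theorem tangent_le_of_convexOn {f' : StrongDual ℝ E} (hf : ConvexOn ℝ s f)
    (hf' : HasFDerivWithinAt f f' s x) (hx : x ∈ s) (hy : y ∈ s) :
    f x + f' (y - x) ≤ f y := by
  have hderiv : HasDerivWithinAt (f ∘ lineMap x y) (f' (y - x)) (lineMap x y ⁻¹' s) (0 : ℝ) :=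
    hasDerivWithinAt_comp_lineMap (by rwa [lineMap_apply_zero])
  have hslope : f' (y - x) ≤ slope (f ∘ lineMap x y) (0 : ℝ) 1 :=
    (hf.comp_affineMap (lineMap x y)).le_slope_of_hasDerivWithinAt
      (by simpa using hx) (by simpa using hy) one_pos hderiv
  have hsecant : slope (f ∘ lineMap x y) (0 : ℝ) 1 = f y - f x := by simp [slope_def_field]
  linarith

theorem apply_lineMap_le_of_apply_sub_le {f' : E → StrongDual ℝ E} {L t : ℝ} (ht : 0 ≤ t)
    (hL : (f' (lineMap x y t) - f' x) (lineMap x y t - x) ≤ L * ‖lineMap x y t - x‖ ^ 2) :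
    f' (lineMap x y t) (y - x) ≤ f' x (y - x) + t * (L * ‖y - x‖ ^ 2) := by
  rcases ht.eq_or_lt with rfl | ht
  · simp
  have hscaled : t * (f' (lineMap x y t) - f' x) (y - x) ≤ t * (t * (L * ‖y - x‖ ^ 2)) := by
    have hsub : lineMap x y t - x = t • (y - x) := by simp [lineMap_apply]
    rw [hsub, map_smul, smul_eq_mul, norm_smul, mul_pow, Real.norm_eq_abs, sq_abs] at hL
    linarith
  have hincr := le_of_mul_le_mul_left hscaled ht
  rw [sub_apply] at hincr
  linarith

theorem le_tangent_add_sq {f' : E → StrongDual ℝ E} {L : ℝ} (hs : Convex ℝ s)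
    (hf : ∀ w ∈ s, HasFDerivWithinAt f (f' w) s w)
    (hL : ∀ w ∈ s, (f' w - f' x) (w - x) ≤ L * ‖w - x‖ ^ 2) (hx : x ∈ s) (hy : y ∈ s) :
    f y ≤ f x + f' x (y - x) + L / 2 * ‖y - x‖ ^ 2 := by
  have hmem : MapsTo (lineMap x y) (Icc (0 : ℝ) 1) s := hs.mapsTo_lineMap hx hy
  have hφ : ∀ t ∈ Icc (0 : ℝ) 1, HasDerivWithinAt (f ∘ lineMap x y)
      (f' (lineMap x y t) (y - x)) (Icc 0 1) t := fun t ht =>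
    (hasDerivWithinAt_comp_lineMap (hf _ (hmem ht))).mono hmem
  let q : ℝ → ℝ := fun t => f x + t * f' x (y - x) + t ^ 2 * (L / 2 * ‖y - x‖ ^ 2)
  have hq : ∀ t, HasDerivAt q (f' x (y - x) + t * (L * ‖y - x‖ ^ 2)) t := fun t => by
    convert! (((hasDerivAt_id t).mul_const (f' x (y - x))).const_add (f x)).add
      ((hasDerivAt_pow 2 t).mul_const (L / 2 * ‖y - x‖ ^ 2)) using 1
    push_cast
    ring
  have hle : (f ∘ lineMap x y) (1 : ℝ) ≤ q 1 :=
    image_le_of_deriv_right_le_deriv_boundary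
      (fun t ht => (hφ t ht).continuousWithinAt)
      (fun t ht => (hφ t (Ico_subset_Icc_self ht)).mono_of_mem_nhdsWithin
        (Icc_mem_nhdsGE_of_mem ht))
      (by simp [q])
      (fun t _ => (hq t).continuousAt.continuousWithinAt)
      (fun t _ => (hq t).hasDerivWithinAt)
      (fun t ht => apply_lineMap_le_of_apply_sub_le ht.1 (hL _ (hmem (Ico_subset_Icc_self ht))))
      (right_mem_Icc.2 zero_le_one)
  simpa [q] using hle

theorem le_add_apply_sub_add_sq_of_convexOn {f' : E → StrongDual ℝ E} {L : ℝ}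
    (hconv : ConvexOn ℝ s f) (hf : ∀ w ∈ s, HasFDerivWithinAt f (f' w) s w)
    (hL : ∀ w ∈ s, (f' w - f' x) (w - x) ≤ L * ‖w - x‖ ^ 2)
    (hx : x ∈ s) (hy : y ∈ s) (hz : z ∈ s) :
    f y ≤ f z + f' x (y - z) + L / 2 * ‖y - x‖ ^ 2 := by
  have hdescent := le_tangent_add_sq hconv.1 hf hL hx hy
  have htangent := tangent_le_of_convexOn hconv (hf x hx) hx hz
  have hsplit : f' x (y - z) = f' x (y - x) - f' x (z - x) := by
    rw [← map_sub, sub_sub_sub_cancel_right]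
  linarith

end NormedSpace

section InnerProductSpace

variable {E : Type*} [NormedAddCommGroup E] [InnerProductSpace ℝ E]

theorem real_inner_le_mul_sq_of_norm_le {u d : E} {L : ℝ} (h : ‖u‖ ≤ L * ‖d‖) :
    ⟪u, d⟫_ℝ ≤ L * ‖d‖ ^ 2 :=
  calc
    ⟪u, d⟫_ℝ ≤ ‖u‖ * ‖d‖ := real_inner_le_norm u d
    _ ≤ L * ‖d‖ * ‖d‖ := by gcongr
    _ = L * ‖d‖ ^ 2 := by ring

/-- In the DAGP update, `c` is the mixing term `∑ u, W v u • x u`. -/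
theorem dagp_per_node_inequality_general [CompleteSpace E] {D : Set E} {f : E → ℝ} {f' : E → E}
    (hconv : ConvexOn ℝ D f) (hdiff : ∀ w ∈ D, HasGradientWithinAt f (f' w) D w)
    {x xstar xnext : E} (hx : x ∈ D) (hxstar : xstar ∈ D) (hxnext : xnext ∈ D)
    {L : ℝ} (hL : ∀ w ∈ D, ⟪f' w - f' x, w - x⟫_ℝ ≤ L * ‖w - x‖ ^ 2)
    {μ : ℝ} (hμ : 0 ≤ μ) {c g z : E} (hz : z = x - c - μ • (f' x - g))
    (hproj : ⟪xstar - xnext, z - xnext⟫_ℝ ≤ 0) (n : E) :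
    μ * ((f xnext - f xstar - ⟪f' xstar, xnext - xstar⟫_ℝ) + (-⟪n, xnext - xstar⟫_ℝ))
      - L * μ / 2 * ‖xnext - x‖ ^ 2
      + ⟪xstar - xnext, x - c - xnext + μ • (g - f' xstar - n)⟫_ℝ
      ≤ 0 := by
  have hthree : f xnext ≤ f xstar + ⟪f' x, xnext - xstar⟫_ℝ + L / 2 * ‖xnext - x‖ ^ 2 :=
    le_add_apply_sub_add_sq_of_convexOn (f' := fun w => InnerProductSpace.toDual ℝ E (f' w))
      hconv (fun w hw => (hdiff w hw).hasFDerivWithinAt)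
      (fun w hw => by simpa [inner_sub_left] using hL w hw) hx hxnext hxstar
  have hgap : f xnext - f xstar - ⟪f' x, xnext - xstar⟫_ℝ - L / 2 * ‖xnext - x‖ ^ 2 ≤ 0 := by
    linarith
  have hvec : x - c - xnext + μ • (g - f' xstar - n) =
      z - xnext + μ • (f' x - f' xstar - n) := by
    rw [hz]
    module
  have hinner : ⟪xstar - xnext, f' x - f' xstar - n⟫_ℝ =
      ⟪f' xstar, xnext - xstar⟫_ℝ + ⟪n, xnext - xstar⟫_ℝ - ⟪f' x, xnext - xstar⟫_ℝ := by
    rw [← neg_sub xnext xstar, inner_neg_left, real_inner_comm, inner_sub_left, inner_sub_left]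
    ring
  calc
    _ = ⟪xstar - xnext, z - xnext⟫_ℝ +
        μ * (f xnext - f xstar - ⟪f' x, xnext - xstar⟫_ℝ - L / 2 * ‖xnext - x‖ ^ 2) := by
      rw [hvec, inner_add_right, real_inner_smul_right, hinner]
      ring
    _ ≤ 0 := add_nonpos hproj (mul_nonpos_of_nonneg_of_nonpos hμ hgap)

end InnerProductSpace

/-- per-node, per-iteration inequality (7) in Appendix B of the paper.
For node `v` with convex `L`-smooth `f_v`, closed convex set `S_v ∋ x*`,
normal-cone vector `n^v ∈ ∂I_{S_v}(x*)`, `z_n^v` given by the DAGP update and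
`x_{n+1}^v = P_{S_v}(z_n^v)`, one has
`μ (F^v(x_{n+1}^v) + T^v(x_{n+1}^v)) - (Lμ/2)‖x_{n+1}^v - x_n^v‖²
  + ⟪x* - x_{n+1}^v, x_n^v - ∑_u w_{vu} x_n^u - x_{n+1}^v + μ(g_n^v - ∇f_v(x*) - n^v)⟫ ≤ 0`. -/
theorem dagp_per_node_inequality (m M : ℕ) (v : Fin M)
    (f : EuclideanSpace ℝ (Fin m) → ℝ)
    (f' : EuclideanSpace ℝ (Fin m) → EuclideanSpace ℝ (Fin m))
    (hconv : ConvexOn ℝ Set.univ f)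
    (hdiff : ∀ w, HasGradientAt f (f' w) w)
    (L : ℝ) (hLip : ∀ w w', ‖f' w - f' w'‖ ≤ L * ‖w - w'‖)
    (S : Set (EuclideanSpace ℝ (Fin m)))
    (hSne : S.Nonempty) (hScl : IsClosed S) (hScv : Convex ℝ S)
    (xstar : EuclideanSpace ℝ (Fin m)) (hxstar : xstar ∈ S)
    (nv : EuclideanSpace ℝ (Fin m))
    (hnv : ∀ y ∈ S, ⟪nv, y - xstar⟫_ℝ ≤ 0)
    (μ : ℝ) (hμ : 0 < μ)
    (W : Matrix (Fin M) (Fin M) ℝ)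
    (x : Fin M → EuclideanSpace ℝ (Fin m)) (g : EuclideanSpace ℝ (Fin m))
    (z : EuclideanSpace ℝ (Fin m))
    (hz : z = x v - (∑ u, W v u • x u) - μ • (f' (x v) - g))
    (xnext : EuclideanSpace ℝ (Fin m))
    -- `xnext = P_S(z)`, via the projection variational characterization
    (hxnextS : xnext ∈ S)
    (hproj : ∀ y ∈ S, ⟪y - xnext, z - xnext⟫_ℝ ≤ 0) :
    μ * ((f xnext - f xstar - ⟪f' xstar, xnext - xstar⟫_ℝ) + (-⟪nv, xnext - xstar⟫_ℝ))
      - L * μ / 2 * ‖xnext - x v‖ ^ 2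
      + ⟪xstar - xnext, x v - (∑ u, W v u • x u) - xnext + μ • (g - f' xstar - nv)⟫_ℝ
      ≤ 0 := by
  exact dagp_per_node_inequality_general hconv (fun w _ => (hdiff w).hasFDerivAt.hasFDerivWithinAt)
    (Set.mem_univ _) (Set.mem_univ _) (Set.mem_univ _)
    (fun w _ => real_inner_le_mul_sq_of_norm_le (hLip w (x v))) hμ.le hz (hproj xstar hxstar) nv
end

section
/- Consider M nodes, where each node v has a convex, differentiable, L-smooth function f_v : ℝ^m → ℝ and a nonempty closed convex set S_v ⊆ ℝ^m. Let W = [w_{vu}] be an M×M real matrix with zero row sums, let μ > 0, let x* ∈ ∩_v S_v, and let n^v ∈ ∂I_{S_v}(x*) for each v. Suppose the sequences (x_n^v)_{n≥0} and (g_n^v)_{n≥0} in ℝ^m satisfy, for every n ≥ 0 and every v: z_n^v = x_n^v − Σ_{u=1}^M w_{vu} x_n^u − μ(∇f_v(x_n^v) − g_n^v) and x_{n+1}^v = P_{S_v}(z_n^v). Define F^v(w) := f_v(w) − f_v(x*) − ⟨∇f_v(x*), w − x*⟩, T^v(w) := −⟨n^v, w − x*⟩, x̃_n^v := x_n^v −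 x*, and g̃_n^v := g_n^v − ∇f_v(x*) − n^v. Then for every real η and every N ≥ 1: Σ_{n=0}^{N−1} [ μ Σ_v (F^v(x_{n+1}^v) + T^v(x_{n+1}^v)) + (η/2) Σ_{u,v} ‖x_{n+1}^u − x_{n+1}^v‖² ] ≤ Σ_{n=0}^{N−1} [ Σ_v ⟨x̃_{n+1}^v, x̃_n^v − Σ_u w_{vu} x̃_n^u − x̃_{n+1}^v + μ g̃_n^v⟩ + (Lμ/2) Σ_v ‖x̃_{n+1}^v − x̃_n^v‖² + (η/2) Σ_{u,v} ‖x̃_{n+1}^u − x̃_{n+1}^v‖² ]. -/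
open scoped InnerProductSpace

/-!
The inequality already holds for each node and each iteration, up to the `η`-terms, which agree on
both sides. Let `a` and `b` be the current and next iterates of a node. The descent lemma between
`a` and `b` and the tangent inequality of the convex `f` between `a` and `xstar` give
`f b ≤ f xstar + ⟪∇f a, b - xstar⟫ + L / 2 * ‖b - a‖ ^ 2`, and testing the variational inequality of
the projection against `xstar` bounds `μ * ⟪∇f a, b - xstar⟫`. The vector `q = ∇f xstar + n`
contributes `-μ * ⟪q, b - xstar⟫` to both sides, and the zero row sums of `W` make its action on the
iterates blind to the shift by `xstar`.
-/

section Calculus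

variable {E F : Type*} [NormedAddCommGroup E] [NormedSpace ℝ E] [NormedAddCommGroup F]
  [NormedSpace ℝ F] {s : Set E} {a b p : E} {L : ℝ}

theorem norm_image_sub_sub_fderiv_le_of_norm_fderiv_sub_le {f : E → F} {f' : E → E →L[ℝ] F}
    (hs : Convex ℝ s) (hf : ∀ w ∈ s, HasFDerivWithinAt f (f' w) s w)
    (hL : ∀ w ∈ s, ‖f' w - f' a‖ ≤ L * ‖w - a‖) (ha : a ∈ s) (hb : b ∈ s) :
    ‖f b - f a - f' a (b - a)‖ ≤ L / 2 * ‖b - a‖ ^ 2 := by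
  let γ : ℝ → E := AffineMap.lineMap a b
  have hγ : Set.MapsTo γ (Set.Icc 0 1) s := hs.mapsTo_lineMap ha hb
  have hremainder : ∀ t ∈ Set.Icc (0 : ℝ) 1,
      HasDerivWithinAt (fun t ↦ f (γ t) - f a - t • f' a (b - a))
        ((f' (γ t) - f' a) (b - a)) (Set.Icc 0 1) t := fun t ht ↦ by
    have hfγ := (hf _ (hγ ht)).comp_hasDerivWithinAt t AffineMap.hasDerivWithinAt_lineMap hγ
    simpa using (hfγ.sub_const (f a)).fun_sub
      ((hasDerivWithinAt_id t _).smul_const (f' a (b - a)))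
  have hmodel : ∀ t : ℝ,
      HasDerivAt (fun t ↦ L / 2 * ‖b - a‖ ^ 2 * t ^ 2) (L * t * ‖b - a‖ ^ 2) t := fun t ↦
    ((hasDerivAt_pow 2 t).const_mul _).congr_deriv (by push_cast; ring)
  have hbound : ∀ t ∈ Set.Ico (0 : ℝ) 1,
      ‖(f' (γ t) - f' a) (b - a)‖ ≤ L * t * ‖b - a‖ ^ 2 := fun t ht ↦ by
    have hdist : ‖γ t - a‖ = t * ‖b - a‖ := by
      simp [γ, AffineMap.lineMap_apply, norm_smul, abs_of_nonneg ht.1]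
    calc ‖(f' (γ t) - f' a) (b - a)‖
        ≤ L * ‖γ t - a‖ * ‖b - a‖ :=
          (f' (γ t) - f' a).le_of_opNorm_le (hL _ (hγ (Set.Ico_subset_Icc_self ht))) _
      _ = L * t * ‖b - a‖ ^ 2 := by rw [hdist]; ring
  have hle := image_norm_le_of_norm_deriv_right_le_deriv_boundary
    (fun t ht ↦ (hremainder t ht).continuousWithinAt)
    (fun t ht ↦ (hremainder t (Set.Ico_subset_Icc_self ht)).mono_of_mem_nhdsWithin
      (Icc_mem_nhdsGE_of_mem ht))
    (by simp [γ]) hmodel hbound (Set.right_mem_Icc.2 zero_le_one)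
  simpa [γ] using hle

theorem add_fderiv_le_of_convexOn {f : E → ℝ} {f' : E →L[ℝ] ℝ} (hconv : ConvexOn ℝ s f)
    (hf : HasFDerivWithinAt f f' s a) (ha : a ∈ s) (hp : p ∈ s) :
    f a + f' (p - a) ≤ f p := by
  let γ : ℝ →ᵃ[ℝ] E := AffineMap.lineMap a p
  have hγ0 : γ 0 = a := AffineMap.lineMap_apply_zero a p
  have hγ1 : γ 1 = p := AffineMap.lineMap_apply_one a p
  have hderiv : HasDerivWithinAt (f ∘ γ) (f' (p - a)) (γ ⁻¹' s) 0 :=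
    HasFDerivWithinAt.comp_hasDerivWithinAt 0 (hγ0.symm ▸ hf)
      AffineMap.hasDerivWithinAt_lineMap (Set.mapsTo_preimage γ s)
  have hslope := (hconv.comp_affineMap γ).le_slope_of_hasDerivWithinAt
    (x := 0) (y := 1) (by simpa [hγ0] using ha) (by simpa [hγ1] using hp) one_pos hderiv
  rw [slope_def_field, Function.comp_apply, Function.comp_apply, hγ0, hγ1, sub_zero, div_one]
    at hslope
  linarith

theorem le_add_fderiv_add_of_convexOn_of_norm_fderiv_sub_le {f : E → ℝ} {f' : E → E →L[ℝ] ℝ}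
    (hconv : ConvexOn ℝ s f) (hf : ∀ w ∈ s, HasFDerivWithinAt f (f' w) s w)
    (hL : ∀ w ∈ s, ‖f' w - f' a‖ ≤ L * ‖w - a‖) (ha : a ∈ s) (hb : b ∈ s) (hp : p ∈ s) :
    f b ≤ f p + f' a (b - p) + L / 2 * ‖b - a‖ ^ 2 := by
  have hdescent : f b - f a - f' a (b - a) ≤ L / 2 * ‖b - a‖ ^ 2 :=
    (Real.le_norm_self _).trans
      (norm_image_sub_sub_fderiv_le_of_norm_fderiv_sub_le hconv.1 hf hL ha hb)
  have htangent : f a + f' a (p - a) ≤ f p := add_fderiv_le_of_convexOn hconv (hf a ha) ha hp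
  have hsplit : f' a (b - p) = f' a (b - a) - f' a (p - a) := by
    rw [← map_sub, sub_sub_sub_cancel_right]
  linarith

end Calculus

theorem sum_smul_sub_of_sum_eq_zero {ι R V : Type*} [Ring R] [AddCommGroup V] [Module R V]
    {s : Finset ι} {w : ι → R} (hw : ∑ i ∈ s, w i = 0) (x : ι → V) (c : V) :
    ∑ i ∈ s, w i • (x i - c) = ∑ i ∈ s, w i • x i := by
  simp only [smul_sub, Finset.sum_sub_distrib, ← Finset.sum_smul, hw, zero_smul, sub_zero]

section ProjectedGradient

variable {E : Type*} [NormedAddCommGroup E] [InnerProductSpace ℝ E] [CompleteSpace E]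

theorem mul_sub_sub_inner_le_of_projected_gradient_step {s : Set E} {f : E → ℝ} {f' : E → E}
    {a b p y g : E} {L μ : ℝ}
    (hconv : ConvexOn ℝ s f) (hf : ∀ w ∈ s, HasGradientWithinAt f (f' w) s w)
    (hL : ∀ w ∈ s, ‖f' w - f' a‖ ≤ L * ‖w - a‖) (ha : a ∈ s) (hb : b ∈ s) (hp : p ∈ s)
    (hμ : 0 ≤ μ) (hproj : ⟪p - b, (y - μ • (f' a - g)) - b⟫_ℝ ≤ 0) (q : E) :
    μ * (f b - f p - ⟪q, b - p⟫_ℝ) ≤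
      ⟪b - p, y - b + μ • (g - q)⟫_ℝ + L * μ / 2 * ‖b - a‖ ^ 2 := by
  have hupper : f b ≤ f p + ⟪f' a, b - p⟫_ℝ + L / 2 * ‖b - a‖ ^ 2 :=
    le_add_fderiv_add_of_convexOn_of_norm_fderiv_sub_le hconv
      (fun w hw ↦ (hf w hw).hasFDerivWithinAt)
      (fun w hw ↦ by simpa only [← map_sub, LinearIsometryEquiv.norm_map] using hL w hw) ha hb hp
  have hgrad : μ * ⟪f' a - q, b - p⟫_ℝ ≤ ⟪b - p, y - b + μ • (g - q)⟫_ℝ := by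
    have hsplit : (y - μ • (f' a - g)) - b = (y - b + μ • (g - q)) - μ • (f' a - q) := by module
    rw [hsplit, ← neg_sub b p, inner_neg_left, inner_sub_right, inner_smul_right,
      real_inner_comm (f' a - q)] at hproj
    linarith
  calc μ * (f b - f p - ⟪q, b - p⟫_ℝ)
      ≤ μ * (⟪f' a - q, b - p⟫_ℝ + L / 2 * ‖b - a‖ ^ 2) :=
        mul_le_mul_of_nonneg_left (by rw [inner_sub_left]; linarith) hμ
    _ = μ * ⟪f' a - q, b - p⟫_ℝ + L * μ / 2 * ‖b - a‖ ^ 2 := by ring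
    _ ≤ ⟪b - p, y - b + μ • (g - q)⟫_ℝ + L * μ / 2 * ‖b - a‖ ^ 2 := by gcongr

end ProjectedGradient

theorem dagp_master_inequality_general {ι E : Type*} [Fintype ι] [NormedAddCommGroup E]
    [InnerProductSpace ℝ E] [CompleteSpace E]
    {f : ι → E → ℝ} {f' : ι → E → E}
    (hconv : ∀ v, ConvexOn ℝ Set.univ (f v)) (hdiff : ∀ v w, HasGradientAt (f v) (f' v w) w)
    {L : ℝ} (hLip : ∀ v w w', ‖f' v w - f' v w'‖ ≤ L * ‖w - w'‖)
    {W : Matrix ι ι ℝ} (hWrow : ∀ v, ∑ u, W v u = 0) {μ : ℝ} (hμ : 0 ≤ μ)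
    (xstar : E) (nv : ι → E) {x g z : ℕ → ι → E}
    (hz : ∀ n v, z n v = x n v - (∑ u, W v u • x n u) - μ • (f' v (x n v) - g n v))
    (hproj : ∀ n v, ⟪xstar - x (n + 1) v, z n v - x (n + 1) v⟫_ℝ ≤ 0) (η : ℝ) (N : ℕ) :
    ∑ n ∈ Finset.range N,
        (μ * ∑ v, ((f v (x (n + 1) v) - f v xstar
                      - ⟪f' v xstar, x (n + 1) v - xstar⟫_ℝ)
                    + (-⟪nv v, x (n + 1) v - xstar⟫_ℝ))
          + η / 2 * ∑ u, ∑ v, ‖x (n + 1) u - x (n + 1) v‖ ^ 2)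
      ≤
    ∑ n ∈ Finset.range N,
        ((∑ v, ⟪x (n + 1) v - xstar,
              (x n v - xstar) - (∑ u, W v u • (x n u - xstar))
                - (x (n + 1) v - xstar)
                + μ • (g n v - f' v xstar - nv v)⟫_ℝ)
          + L * μ / 2 * ∑ v, ‖(x (n + 1) v - xstar) - (x n v - xstar)‖ ^ 2
          + η / 2 * ∑ u, ∑ v,
              ‖(x (n + 1) u - xstar) - (x (n + 1) v - xstar)‖ ^ 2) := by
  simp only [sum_smul_sub_of_sum_eq_zero (hWrow _), sub_right_comm _ xstar (∑ _, _),
    sub_sub_sub_cancel_right]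
  refine Finset.sum_le_sum fun n _ ↦ ?_
  rw [Finset.mul_sum, Finset.mul_sum (a := L * μ / 2), ← Finset.sum_add_distrib]
  gcongr with v
  have hnode := mul_sub_sub_inner_le_of_projected_gradient_step (hconv v)
    (fun w _ ↦ hasGradientWithinAt_univ.2 (hdiff v w)) (fun w _ ↦ hLip v w (x n v))
    (Set.mem_univ _) (Set.mem_univ _) (Set.mem_univ _) hμ (hz n v ▸ hproj n v)
    (f' v xstar + nv v)
  rwa [inner_add_left, ← sub_sub, ← sub_sub, sub_eq_add_neg _ ⟪nv v, _⟫_ℝ] at hnode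

/-- master inequality (7') in Appendix B of the paper.
Summing the per-node, per-iteration DAGP inequality over all nodes `v` and
iterations `n = 0, …, N-1`, after adding and subtracting
`(η/2) ∑_{u,v} ‖x_{n+1}^u - x_{n+1}^v‖²`, yields the stated bound. -/
theorem dagp_master_inequality (m M : ℕ)
    (f : Fin M → EuclideanSpace ℝ (Fin m) → ℝ)
    (f' : Fin M → EuclideanSpace ℝ (Fin m) → EuclideanSpace ℝ (Fin m))
    (hconv : ∀ v, ConvexOn ℝ Set.univ (f v))
    (hdiff : ∀ v w, HasGradientAt (f v) (f' v w) w)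
    (L : ℝ) (hLip : ∀ v w w', ‖f' v w - f' v w'‖ ≤ L * ‖w - w'‖)
    (S : Fin M → Set (EuclideanSpace ℝ (Fin m)))
    (hSne : ∀ v, (S v).Nonempty) (hScl : ∀ v, IsClosed (S v))
    (hScv : ∀ v, Convex ℝ (S v))
    (W : Matrix (Fin M) (Fin M) ℝ) (hWrow : ∀ v, ∑ u, W v u = 0)
    (μ : ℝ) (hμ : 0 < μ)
    (xstar : EuclideanSpace ℝ (Fin m)) (hxstar : ∀ v, xstar ∈ S v)
    (nv : Fin M → EuclideanSpace ℝ (Fin m))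
    (hnv : ∀ v, ∀ y ∈ S v, ⟪nv v, y - xstar⟫_ℝ ≤ 0)
    (x g z : ℕ → Fin M → EuclideanSpace ℝ (Fin m))
    (hz : ∀ n v, z n v = x n v - (∑ u, W v u • x n u) - μ • (f' v (x n v) - g n v))
    -- `x_{n+1}^v = P_{S_v}(z_n^v)`, via the projection variational characterization
    (hxS : ∀ n v, x (n + 1) v ∈ S v)
    (hproj : ∀ n v, ∀ y ∈ S v, ⟪y - x (n + 1) v, z n v - x (n + 1) v⟫_ℝ ≤ 0) :
    ∀ (η : ℝ) (N : ℕ), 1 ≤ N →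
      ∑ n ∈ Finset.range N,
          (μ * ∑ v, ((f v (x (n + 1) v) - f v xstar
                        - ⟪f' v xstar, x (n + 1) v - xstar⟫_ℝ)
                      + (-⟪nv v, x (n + 1) v - xstar⟫_ℝ))
            + η / 2 * ∑ u, ∑ v, ‖x (n + 1) u - x (n + 1) v‖ ^ 2)
        ≤
      ∑ n ∈ Finset.range N,
          ((∑ v, ⟪x (n + 1) v - xstar,
                (x n v - xstar) - (∑ u, W v u • (x n u - xstar))
                  - (x (n + 1) v - xstar)
                  + μ • (g n v - f' v xstar - nv v)⟫_ℝ)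
            + L * μ / 2 * ∑ v, ‖(x (n + 1) v - xstar) - (x n v - xstar)‖ ^ 2
            + η / 2 * ∑ u, ∑ v,
                ‖(x (n + 1) u - xstar) - (x (n + 1) v - xstar)‖ ^ 2) :=
  fun η N _ ↦ dagp_master_inequality_general hconv hdiff hLip hWrow hμ.le xstar nv hz
    (fun n v ↦ hproj n v xstar (hxstar v)) η N
end

section
/- Let f_v : ℝ^m → ℝ be convex and differentiable for v = 1,…,M, let S_v ⊆ ℝ^m be nonempty closed convex sets, let x* ∈ ∩_v S_v, and let n^v ∈ ∂I_{S_v}(x*) for each v with Σ_{v=1}^M (n^v + ∇f_v(x*)) = 0. Define F^v(w) := f_v(w) − f_v(x*) − ⟨∇f_v(x*), w − x*⟩ and T^v(w) := −⟨n^v, w − x*⟩. Let x̄^v ∈ S_v for each v, set x̄ := (1/M) Σ_v x̄^v, and suppose Σ_{v=1}^M (F^v(x̄^v) + T^v(x̄^v)) ≤ ε for some ε ≥ 0. Then | Σ_{v=1}^M f_v(x̄^v) − Σ_{v=1}^M f_v(x*) | ≤ ε + sqrt( Σ_v ‖n^v + ∇f_v(x*)‖² ) · sqrt( Σ_v ‖x̄^v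 − x̄‖² ). -/
open scoped InnerProductSpace

/-! Each `a_v = n^v + ∇f_v(x*)` is a subgradient at `x*` of `f_v` restricted to `S_v`, and
`F^v + T^v` is the linearization error of `f_v` with slope `a_v`, so it is nonnegative. The
objective gap is the total linearization error plus `∑_v ⟪a_v, x̄^v - x*⟫`; as the `a_v` sum to
zero, `x*` may be replaced there by any common point, in particular by `x̄`, before applying
Cauchy–Schwarz. -/

lemma le_sub_of_convexOn_of_hasLineDerivWithinAt {E : Type*} [AddCommGroup E] [Module ℝ E]
    {s : Set E} {f : E → ℝ} {d : ℝ} {x y : E} (hf : ConvexOn ℝ s f)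
    (hd : HasLineDerivWithinAt ℝ f d s x (y - x)) (hx : x ∈ s) (hy : y ∈ s) :
    d ≤ f y - f x := by
  have hline : ⇑(AffineMap.lineMap (k := ℝ) x y) = fun t : ℝ => x + t • (y - x) := by
    ext t
    rw [AffineMap.lineMap_apply_module', add_comm]
  have hconv : ConvexOn ℝ ((fun t : ℝ => x + t • (y - x)) ⁻¹' s)
      (fun t : ℝ => f (x + t • (y - x))) := by
    simpa only [hline, Function.comp_def] using hf.comp_affineMap (AffineMap.lineMap x y)
  have hslope : d ≤ slope (fun t : ℝ => f (x + t • (y - x))) 0 1 :=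
    hconv.le_slope_of_hasDerivWithinAt (by simpa using hx) (by simpa using hy) zero_lt_one hd
  simpa [slope_def_field] using hslope

section InnerProductSpace

variable {ι E : Type*} [NormedAddCommGroup E] [InnerProductSpace ℝ E]

/-- `g` is a subgradient at `x` of the restriction of `f` to `s`, that is, of the extended-valued
function equal to `f` on `s` and to `+∞` elsewhere (for `x ∈ s`). -/
def IsSubgradientWithinAt (f : E → ℝ) (g : E) (s : Set E) (x : E) : Prop :=
  ∀ y ∈ s, ⟪g, y - x⟫_ℝ ≤ f y - f x

lemma isSubgradientWithinAt_of_convexOn_of_hasGradientWithinAt [CompleteSpace E] {f : E → ℝ}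
    {g x : E} {s : Set E} (hf : ConvexOn ℝ s f) (hg : HasGradientWithinAt f g s x) (hx : x ∈ s) :
    IsSubgradientWithinAt f g s x := fun y hy => by
  simpa using le_sub_of_convexOn_of_hasLineDerivWithinAt hf
    (hg.hasFDerivWithinAt.hasLineDerivWithinAt (y - x)) hx hy

lemma IsSubgradientWithinAt.normal_add {f : E → ℝ} {g n x : E} {s : Set E}
    (hg : IsSubgradientWithinAt f g s x) (hn : ∀ y ∈ s, ⟪n, y - x⟫_ℝ ≤ 0) :
    IsSubgradientWithinAt f (n + g) s x := fun y hy => by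
  rw [inner_add_left]
  linarith [hg y hy, hn y hy]

lemma abs_sum_inner_le_sqrt_mul_sqrt (s : Finset ι) (a b : ι → E) :
    |∑ i ∈ s, ⟪a i, b i⟫_ℝ| ≤ √(∑ i ∈ s, ‖a i‖ ^ 2) * √(∑ i ∈ s, ‖b i‖ ^ 2) :=
  calc |∑ i ∈ s, ⟪a i, b i⟫_ℝ|
    _ ≤ ∑ i ∈ s, |⟪a i, b i⟫_ℝ| := Finset.abs_sum_le_sum_abs _ _
    _ ≤ ∑ i ∈ s, ‖a i‖ * ‖b i‖ := Finset.sum_le_sum fun _ _ => abs_real_inner_le_norm _ _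
    _ ≤ _ := Real.sum_mul_le_sqrt_mul_sqrt _ _ _

lemma sum_inner_sub_eq_of_sum_eq_zero {s : Finset ι} {a : ι → E} (ha : ∑ i ∈ s, a i = 0)
    (x : ι → E) (c d : E) :
    ∑ i ∈ s, ⟪a i, x i - c⟫_ℝ = ∑ i ∈ s, ⟪a i, x i - d⟫_ℝ := by
  simp only [inner_sub_right, Finset.sum_sub_distrib, ← sum_inner, ha, inner_zero_left]

theorem dagp_cauchy_schwarz_step_general [Fintype ι] {f : ι → E → ℝ} {g n x : ι → E}
    {S : ι → Set E} {xstar : E} {ε : ℝ}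
    (hg : ∀ v, IsSubgradientWithinAt (f v) (g v) (S v) xstar)
    (hn : ∀ v, ∀ y ∈ S v, ⟪n v, y - xstar⟫_ℝ ≤ 0)
    (hopt : ∑ v, (n v + g v) = 0) (hx : ∀ v, x v ∈ S v)
    (hgap : ∑ v, ((f v (x v) - f v xstar - ⟪g v, x v - xstar⟫_ℝ)
        + (-⟪n v, x v - xstar⟫_ℝ)) ≤ ε) (c : E) :
    |∑ v, f v (x v) - ∑ v, f v xstar| ≤
      ε + √(∑ v, ‖n v + g v‖ ^ 2) * √(∑ v, ‖x v - c‖ ^ 2) := by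
  let gap v := f v (x v) - f v xstar - ⟪n v + g v, x v - xstar⟫_ℝ
  have gap_nonneg : 0 ≤ ∑ v, gap v :=
    Finset.sum_nonneg fun v _ => sub_nonneg.2 ((hg v).normal_add (hn v) (x v) (hx v))
  have gap_le : ∑ v, gap v ≤ ε := by
    refine le_of_eq_of_le (Finset.sum_congr rfl fun v _ => ?_) hgap
    simp only [gap, inner_add_left]
    ring
  calc |∑ v, f v (x v) - ∑ v, f v xstar|
    _ = |∑ v, gap v + ∑ v, ⟪n v + g v, x v - c⟫_ℝ| := by
      rw [sum_inner_sub_eq_of_sum_eq_zero hopt x c xstar]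
      simp only [gap, Finset.sum_sub_distrib, sub_add_cancel]
    _ ≤ |∑ v, gap v| + |∑ v, ⟪n v + g v, x v - c⟫_ℝ| := abs_add_le _ _
    _ ≤ ε + √(∑ v, ‖n v + g v‖ ^ 2) * √(∑ v, ‖x v - c‖ ^ 2) :=
      add_le_add ((abs_of_nonneg gap_nonneg).trans_le gap_le)
        (abs_sum_inner_le_sqrt_mul_sqrt _ _ _)

end InnerProductSpace

/-- final Cauchy–Schwarz step in the proof of Theorem 2 of the paper.
If `∑_v (F^v(x̄^v) + T^v(x̄^v)) ≤ ε` with `x̄^v ∈ S_v` and `∑_v (n^v + ∇f_v(x*)) = 0`, then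
`|∑_v f_v(x̄^v) - ∑_v f_v(x*)| ≤ ε + √(∑_v ‖n^v + ∇f_v(x*)‖²) · √(∑_v ‖x̄^v - x̄‖²)`. -/
theorem dagp_cauchy_schwarz_step (m M : ℕ)
    (f : Fin M → EuclideanSpace ℝ (Fin m) → ℝ)
    (f' : Fin M → EuclideanSpace ℝ (Fin m) → EuclideanSpace ℝ (Fin m))
    (hconv : ∀ v, ConvexOn ℝ Set.univ (f v))
    (hdiff : ∀ v w, HasGradientAt (f v) (f' v w) w)
    (S : Fin M → Set (EuclideanSpace ℝ (Fin m)))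
    (hSne : ∀ v, (S v).Nonempty) (hScl : ∀ v, IsClosed (S v))
    (hScv : ∀ v, Convex ℝ (S v))
    (xstar : EuclideanSpace ℝ (Fin m)) (hxstar : ∀ v, xstar ∈ S v)
    (nv : Fin M → EuclideanSpace ℝ (Fin m))
    (hnv : ∀ v, ∀ y ∈ S v, ⟪nv v, y - xstar⟫_ℝ ≤ 0)
    (hopt : ∑ v, (nv v + f' v xstar) = 0)
    (xbar : Fin M → EuclideanSpace ℝ (Fin m)) (hxbarS : ∀ v, xbar v ∈ S v)
    (ε : ℝ) (hε : 0 ≤ ε)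
    (hgap : ∑ v, ((f v (xbar v) - f v xstar - ⟪f' v xstar, xbar v - xstar⟫_ℝ)
        + (-⟪nv v, xbar v - xstar⟫_ℝ)) ≤ ε) :
    |∑ v, f v (xbar v) - ∑ v, f v xstar| ≤
      ε + Real.sqrt (∑ v, ‖nv v + f' v xstar‖ ^ 2) *
        Real.sqrt (∑ v, ‖xbar v - (M : ℝ)⁻¹ • ∑ u, xbar u‖ ^ 2) :=
  dagp_cauchy_schwarz_step_general
    (fun v => isSubgradientWithinAt_of_convexOn_of_hasGradientWithinAt
      ((hconv v).subset (Set.subset_univ _) (hScv v))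
      (hdiff v xstar).hasFDerivAt.hasFDerivWithinAt (hxstar v))
    hnv hopt hxbarS hgap _
end

section
/- Consider M nodes, each node v having a convex, differentiable, L-smooth function f_v : ℝ^m → ℝ and a nonempty closed convex set S_v ⊆ ℝ^m. Let W = [w_{vu}] be an M×M real matrix with zero row sums, let μ > 0 and η > 0, let x* ∈ ∩_v S_v, and let n^v ∈ ∂I_{S_v}(x*) with Σ_{v=1}^M (n^v + ∇f_v(x*)) = 0. Suppose that for every n ≥ 0 and every v: z_n^v = x_n^v − Σ_{u=1}^M w_{vu} x_n^u − μ(∇f_v(x_n^v) − g_n^v) and x_{n+1}^v = P_{S_v}(z_n^v), where (g_n^v) are arbitrary vectors in ℝ^m. With x̃_n^v := x_n^v − x* and g̃_n^v := g_n^v − ∇f_v(x*) − n^v, define for each N ≥ 1: A_N := −Σ_{n=0}^{N−1} [ Σ_v ⟨x̃_{n+1}^v, x̃_n^v − Σ_u w_{vu} x̃_n^u − x̃_{n+1}^v + μ g̃_n^v⟩ + (Lμ/2) Σ_v ‖x̃_{n+1}^v − x̃_n^v‖² + (η/2) Σ_{u,v} ‖x̃_{n+1}^u − x̃_{n+1}^v‖²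 ]. Assume there exists C ≥ 0 such that A_N ≥ −C for all N ≥ 1. Then, with x̄^v_N := (1/N) Σ_{n=1}^N x_n^v and x̄_N := (1/M) Σ_v x̄^v_N, for every N ≥ 1 and every v: (a) ‖x̄_N − x̄^v_N‖² ≤ C/(ηMN); (b) dist(x̄_N, S_v)² ≤ C/(ηMN); and (c) | Σ_v f_v(x̄^v_N) − Σ_v f_v(x*) | ≤ C/(μN) + sqrt( Σ_v ‖n^v + ∇f_v(x*)‖² ) · sqrt( C/(ηMN) ). -/
open scoped InnerProductSpace

/-!
Write `p_v = n^v + ∇f_v(x*)` and let `φ_v(y) = f_v(y) - f_v(x*) - ⟨p_v, y - x*⟩`, which is convex,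
and nonnegative on `S_v` by the gradient inequality and the normal-cone condition. Testing the
projection inequality at `x*`, and combining convexity with the descent lemma, shows that the `n`-th
summand of `-A_N` dominates the merit
`Φ(a) = μ ∑_v φ_v(a^v) + (η/2) ∑_{u,v} ‖a^u - a^v‖²` of `a = x_{n+1}`. Since `Φ` is convex,
Jensen's inequality gives `Φ(x̄_N) ≤ C/N` for the averaged iterates.

Both parts of `Φ(x̄_N)` are nonnegative, so each obeys this bound. The second one is
`η M ∑_v ‖x̄_N - x̄_N^v‖²`, which gives the consensus rate, and the feasibility rate because
`x̄_N^v ∈ S_v`. The first one bounds the objective error up to the linear term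
`∑_v ⟨p_v, x̄_N^v - x*⟩`, in which `x*` may be replaced by `x̄_N` because `∑_v p_v = 0`;
Cauchy–Schwarz and the consensus rate then yield the objective rate.
-/

section Gradient

variable {E : Type*} [NormedAddCommGroup E] [InnerProductSpace ℝ E]
  {f : E → ℝ} {f' : E → E} {L : ℝ}

lemma inner_sub_inner_le_of_lipschitz_at {a d : E} {t : ℝ} (ht : 0 ≤ t)
    (hLip : ∀ w, ‖f' w - f' a‖ ≤ L * ‖w - a‖) :
    ⟪f' (a + t • d), d⟫_ℝ - ⟪f' a, d⟫_ℝ ≤ L * ‖d‖ ^ 2 * t :=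
  calc ⟪f' (a + t • d), d⟫_ℝ - ⟪f' a, d⟫_ℝ = ⟪f' (a + t • d) - f' a, d⟫_ℝ := by
        rw [inner_sub_left]
    _ ≤ ‖f' (a + t • d) - f' a‖ * ‖d‖ := real_inner_le_norm _ _
    _ ≤ L * ‖a + t • d - a‖ * ‖d‖ := by gcongr; exact hLip _
    _ = L * ‖d‖ ^ 2 * t := by
        rw [add_sub_cancel_left, norm_smul, Real.norm_of_nonneg ht]; ring

variable [CompleteSpace E]

lemma hasDerivAt_add_smul_of_hasGradientAt {a d y : E} {t : ℝ}
    (hf : HasGradientAt f y (a + t • d)) :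
    HasDerivAt (fun s : ℝ => f (a + s • d)) ⟪y, d⟫_ℝ t := by
  have hline : HasDerivAt (fun s : ℝ => a + s • d) d t := by
    simpa using ((hasDerivAt_id t).smul_const d).const_add a
  exact (hf.hasFDerivAt.comp_hasDerivAt t hline).congr_deriv (by simp)

lemma add_inner_gradient_le_of_convexOn {s : Set E} {a b y : E} (hconv : ConvexOn ℝ s f)
    (hf : HasGradientAt f y a) (ha : a ∈ s) (hb : b ∈ s) :
    f a + ⟪y, b - a⟫_ℝ ≤ f b := by
  have hline : ConvexOn ℝ (AffineMap.lineMap a b ⁻¹' s) (fun t : ℝ => f (a + t • (b - a))) := by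
    simpa [Function.comp_def, AffineMap.lineMap_apply, add_comm] using
      hconv.comp_affineMap (AffineMap.lineMap a b : ℝ →ᵃ[ℝ] E)
  have hslope := hline.le_slope_of_hasDerivAt (x := 0) (y := 1) (by simpa using ha)
    (by simpa using hb) zero_lt_one (hasDerivAt_add_smul_of_hasGradientAt (by simpa using hf))
  simp only [slope_def_field, one_smul, add_sub_cancel, zero_smul, add_zero, sub_zero,
    div_one] at hslope
  linarith

lemma le_add_inner_gradient_add_sq {a b : E} (hdiff : ∀ w, HasGradientAt f (f' w) w)
    (hLip : ∀ w, ‖f' w - f' a‖ ≤ L * ‖w - a‖) :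
    f b ≤ f a + ⟪f' a, b - a⟫_ℝ + L / 2 * ‖b - a‖ ^ 2 := by
  set d := b - a with hd
  let defect : ℝ → ℝ := fun t => f (a + t • d) - t * ⟪f' a, d⟫_ℝ - L / 2 * ‖d‖ ^ 2 * t ^ 2
  have hderiv (t : ℝ) :
      HasDerivAt defect (⟪f' (a + t • d), d⟫_ℝ - ⟪f' a, d⟫_ℝ - L * ‖d‖ ^ 2 * t) t := by
    refine (((hasDerivAt_add_smul_of_hasGradientAt (hdiff _)).sub
      ((hasDerivAt_id t).mul_const ⟪f' a, d⟫_ℝ)).sub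
      (((hasDerivAt_id t).pow 2).const_mul (L / 2 * ‖d‖ ^ 2))).congr_deriv ?_
    simp only [id_eq, one_mul, mul_one, Nat.cast_ofNat]
    ring
  have hanti : AntitoneOn defect (Set.Icc 0 1) := by
    refine antitoneOn_of_hasDerivWithinAt_nonpos (convex_Icc 0 1)
      (fun t _ => (hderiv t).continuousAt.continuousWithinAt)
      (fun t _ => (hderiv t).hasDerivWithinAt) fun t ht => ?_
    rw [interior_Icc] at ht
    exact sub_nonpos.2 (inner_sub_inner_le_of_lipschitz_at ht.1.le hLip)
  have hend := hanti (Set.left_mem_Icc.2 zero_le_one) (Set.right_mem_Icc.2 zero_le_one) zero_le_one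
  simp only [defect, hd, one_smul, zero_smul, add_sub_cancel, add_zero, one_mul, zero_mul, one_pow,
    mul_one, sub_zero, ne_eq, OfNat.ofNat_ne_zero, not_false_eq_true, zero_pow, mul_zero] at hend
  linarith

lemma sub_le_inner_gradient_add_sq {a b c : E} (hconv : ConvexOn ℝ Set.univ f)
    (hdiff : ∀ w, HasGradientAt f (f' w) w) (hLip : ∀ w, ‖f' w - f' a‖ ≤ L * ‖w - a‖) :
    f b - f c ≤ ⟪f' a, b - c⟫_ℝ + L / 2 * ‖b - a‖ ^ 2 := by
  have hlower := add_inner_gradient_le_of_convexOn hconv (hdiff a) (Set.mem_univ a) (Set.mem_univ c)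
  have hupper := le_add_inner_gradient_add_sq (b := b) hdiff hLip
  have hsplit : ⟪f' a, b - c⟫_ℝ = ⟪f' a, b - a⟫_ℝ - ⟪f' a, c - a⟫_ℝ := by
    rw [← inner_sub_right, sub_sub_sub_cancel_right]
  linarith

end Gradient

section BregmanGap

variable {E : Type*} [NormedAddCommGroup E] [InnerProductSpace ℝ E]

/-- The excess of `f` over the affine function of slope `p` that agrees with `f` at `x₀`. For
`p = ν + ∇f(x₀)` with `ν` normal to `S` at `x₀`, this is on `S` the Bregman distance of `f + I_S`
from `x₀`, relative to its subgradient `p`. -/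
def bregmanGap (f : E → ℝ) (p x₀ y : E) : ℝ := f y - f x₀ - ⟪p, y - x₀⟫_ℝ

lemma convexOn_bregmanGap {f : E → ℝ} {s : Set E} (hf : ConvexOn ℝ s f) (p x₀ : E) :
    ConvexOn ℝ s (bregmanGap f p x₀) := by
  refine ((hf.sub ((innerₛₗ ℝ p).concaveOn hf.1)).add_const (⟪p, x₀⟫_ℝ - f x₀)).congr fun y _ => ?_
  change f y - ⟪p, y⟫_ℝ + (⟪p, x₀⟫_ℝ - f x₀) = f y - f x₀ - ⟪p, y - x₀⟫_ℝ
  rw [inner_sub_right]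
  ring

variable [CompleteSpace E]

lemma bregmanGap_nonneg {f : E → ℝ} {s : Set E} {x₀ y ν q : E} (hconv : ConvexOn ℝ s f)
    (hf : HasGradientAt f q x₀) (hx₀ : x₀ ∈ s) (hy : y ∈ s) (hν : ⟪ν, y - x₀⟫_ℝ ≤ 0) :
    0 ≤ bregmanGap f (ν + q) x₀ y := by
  have hgrad := add_inner_gradient_le_of_convexOn hconv hf hx₀ hy
  rw [bregmanGap, inner_add_left]
  linarith

lemma mul_bregmanGap_le_of_projection {f : E → ℝ} {f' : E → E} {L μ : ℝ} {a b r g x₀ ν : E}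
    (hμ : 0 ≤ μ) (hconv : ConvexOn ℝ Set.univ f) (hdiff : ∀ w, HasGradientAt f (f' w) w)
    (hLip : ∀ w, ‖f' w - f' a‖ ≤ L * ‖w - a‖)
    (hproj : ⟪x₀ - b, a - r - μ • (f' a - g) - b⟫_ℝ ≤ 0) :
    μ * bregmanGap f (ν + f' x₀) x₀ b ≤
      ⟪b - x₀, (a - x₀) - r - (b - x₀) + μ • (g - f' x₀ - ν)⟫_ℝ
        + L * μ / 2 * ‖(b - x₀) - (a - x₀)‖ ^ 2 := by
  have hproj' : 0 ≤ ⟪b - x₀, a - r - μ • (f' a - g) - b⟫_ℝ := by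
    rwa [← neg_sub, inner_neg_left, neg_nonpos] at hproj
  have hsplit : (a - x₀) - r - (b - x₀) + μ • (g - f' x₀ - ν)
      = (a - r - μ • (f' a - g) - b) + μ • (f' a - (ν + f' x₀)) := by module
  have hgrad := mul_le_mul_of_nonneg_left
    (sub_le_inner_gradient_add_sq (b := b) (c := x₀) hconv hdiff hLip) hμ
  have hslope : ⟪b - x₀, f' a - (ν + f' x₀)⟫_ℝ = ⟪f' a, b - x₀⟫_ℝ - ⟪ν + f' x₀, b - x₀⟫_ℝ := by
    rw [real_inner_comm, inner_sub_left]
  rw [hsplit, inner_add_right, real_inner_smul_right, hslope, sub_sub_sub_cancel_right, bregmanGap]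
  linarith

end BregmanGap

section TimeAverage

variable {F : Type*} [AddCommGroup F] [Module ℝ F] {s : Set F} {x : ℕ → F} {N : ℕ}

/-- The average of `x 1, …, x N`; the initial point `x 0` is left out, since only the later iterates
are projected. -/
noncomputable def timeAverage (x : ℕ → F) (N : ℕ) : F := (N : ℝ)⁻¹ • ∑ n ∈ Finset.Icc 1 N, x n

lemma timeAverage_eq_smul_sum_range (x : ℕ → F) (N : ℕ) :
    timeAverage x N = (N : ℝ)⁻¹ • ∑ n ∈ Finset.range N, x (n + 1) := by
  rw [timeAverage, Finset.range_eq_Ico, Finset.sum_Ico_add' x 0 N 1]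
  rfl

lemma timeAverage_mem (hs : Convex ℝ s) (hN : N ≠ 0) (hx : ∀ n, x (n + 1) ∈ s) :
    timeAverage x N ∈ s := by
  rw [timeAverage_eq_smul_sum_range, Finset.smul_sum]
  exact hs.sum_mem (fun _ _ => by positivity) (by simp [hN]) fun n _ => hx n

lemma map_timeAverage_le {φ : F → ℝ} (hφ : ConvexOn ℝ s φ) (hN : N ≠ 0)
    (hx : ∀ n, x (n + 1) ∈ s) :
    φ (timeAverage x N) ≤ timeAverage (φ ∘ x) N := by
  simp only [timeAverage_eq_smul_sum_range, Finset.smul_sum]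
  exact hφ.map_sum_le (fun _ _ => by positivity) (by simp [hN]) fun n _ => hx n

end TimeAverage

section NodeMean

variable {ι : Type*} [Fintype ι]

section Module

variable {F : Type*} [AddCommGroup F] [Module ℝ F]

/-- The network average of the values held by the nodes. -/
noncomputable def nodeMean (a : ι → F) : F := (Fintype.card ι : ℝ)⁻¹ • ∑ u, a u

lemma sum_nodeMean_sub [Nonempty ι] (a : ι → F) : ∑ v, (nodeMean a - a v) = 0 := by
  rw [Finset.sum_sub_distrib, Finset.sum_const, Finset.card_univ, nodeMean,
    ← Nat.cast_smul_eq_nsmul ℝ, smul_inv_smul₀ (Nat.cast_ne_zero.2 Fintype.card_ne_zero), sub_self]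

lemma sum_smul_sub_eq_of_sum_eq_zero {w : ι → ℝ} (hw : ∑ u, w u = 0) (a : ι → F) (c : F) :
    ∑ u, w u • (a u - c) = ∑ u, w u • a u := by
  simp only [smul_sub, Finset.sum_sub_distrib, ← Finset.sum_smul, hw, zero_smul, sub_zero]

end Module

variable {E : Type*} [NormedAddCommGroup E] [InnerProductSpace ℝ E]

lemma sum_sum_norm_sub_sq [Nonempty ι] (a : ι → E) :
    ∑ u, ∑ v, ‖a u - a v‖ ^ 2 = 2 * Fintype.card ι * ∑ v, ‖nodeMean a - a v‖ ^ 2 := by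
  have hpolar (u v : ι) : ‖a u - a v‖ ^ 2 = ‖nodeMean a - a u‖ ^ 2 + ‖nodeMean a - a v‖ ^ 2
      - 2 * ⟪nodeMean a - a v, nodeMean a - a u⟫_ℝ := by
    rw [← sub_sub_sub_cancel_left (a v) (a u) (nodeMean a), norm_sub_sq_real]
    ring
  have hcross : ∑ u, ∑ v, ⟪nodeMean a - a v, nodeMean a - a u⟫_ℝ = 0 := by
    simp only [← sum_inner, sum_nodeMean_sub, inner_zero_left, Finset.sum_const_zero]
  simp only [hpolar, Finset.sum_add_distrib, Finset.sum_sub_distrib, ← Finset.mul_sum, hcross,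
    Finset.sum_const, Finset.card_univ, nsmul_eq_mul]
  ring

lemma abs_sum_inner_sub_le {p : ι → E} (hp : ∑ v, p v = 0) (a : ι → E) (b c : E) :
    |∑ v, ⟪p v, a v - b⟫_ℝ| ≤ √(∑ v, ‖p v‖ ^ 2) * √(∑ v, ‖c - a v‖ ^ 2) := by
  have hrecentre : ∑ v, ⟪p v, a v - b⟫_ℝ = ∑ v, ⟪p v, a v - c⟫_ℝ := by
    simp only [inner_sub_right, Finset.sum_sub_distrib, ← sum_inner, hp, inner_zero_left]
  calc |∑ v, ⟪p v, a v - b⟫_ℝ| = |∑ v, ⟪p v, a v - c⟫_ℝ| := by rw [hrecentre]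
    _ ≤ ∑ v, |⟪p v, a v - c⟫_ℝ| := Finset.abs_sum_le_sum_abs _ _
    _ ≤ ∑ v, ‖p v‖ * ‖c - a v‖ := Finset.sum_le_sum fun v _ => by
        rw [norm_sub_rev c]; exact abs_real_inner_le_norm _ _
    _ ≤ _ := Real.sum_mul_le_sqrt_mul_sqrt _ _ _

end NodeMean

lemma convexOn_finset_sum {κ F : Type*} [AddCommGroup F] [Module ℝ F] {s : Set F}
    {φ : κ → F → ℝ} (hs : Convex ℝ s) (t : Finset κ) (hφ : ∀ i ∈ t, ConvexOn ℝ s (φ i)) :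
    ConvexOn ℝ s (fun y => ∑ i ∈ t, φ i y) := by
  simpa only [← Finset.sum_apply] using
    Finset.sum_induction φ (ConvexOn ℝ s) (fun _ _ => ConvexOn.add) (convexOn_const 0 hs) hφ

section Merit

variable {ι E : Type*} [Fintype ι] [NormedAddCommGroup E] [InnerProductSpace ℝ E]
  {f : ι → E → ℝ} {p : ι → E} {x₀ : E} {μ η ε : ℝ} {a : ι → E}

/-- The merit `μ ∑_v φ_v(a^v) + (η/2) ∑_{u,v} ‖a^u - a^v‖²` of a network state `a`: it weighs the
optimality gaps `φ_v` of the nodes against their disagreement. -/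
noncomputable def merit (f : ι → E → ℝ) (p : ι → E) (x₀ : E) (μ η : ℝ) (a : ι → E) : ℝ :=
  μ * ∑ v, bregmanGap (f v) (p v) x₀ (a v) + η / 2 * ∑ u, ∑ v, ‖a u - a v‖ ^ 2

lemma convexOn_merit (hf : ∀ v, ConvexOn ℝ Set.univ (f v)) (hμ : 0 ≤ μ) (hη : 0 ≤ η) :
    ConvexOn ℝ Set.univ (merit f p x₀ μ η) := by
  have hgap (v : ι) : ConvexOn ℝ Set.univ fun a : ι → E => bregmanGap (f v) (p v) x₀ (a v) :=
    (convexOn_bregmanGap (hf v) (p v) x₀).comp_linearMap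
      (LinearMap.proj v : (ι → E) →ₗ[ℝ] E)
  have hpair (u v : ι) : ConvexOn ℝ Set.univ fun a : ι → E => ‖a u - a v‖ ^ 2 := by
    let nodeDiff := (LinearMap.proj u : (ι → E) →ₗ[ℝ] E) - LinearMap.proj v
    exact (convexOn_univ_norm.comp_linearMap nodeDiff).pow (fun _ _ => norm_nonneg _) 2
  exact ((convexOn_finset_sum convex_univ _ fun v _ => hgap v).smul hμ).add
    ((convexOn_finset_sum convex_univ _ fun u _ =>
      convexOn_finset_sum convex_univ _ fun v _ => hpair u v).smul (by positivity))

lemma sum_norm_nodeMean_sub_sq_le_of_merit_le [Nonempty ι] (hμ : 0 ≤ μ) (hη : 0 < η)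
    (hgap : ∀ v, 0 ≤ bregmanGap (f v) (p v) x₀ (a v)) (ha : merit f p x₀ μ η a ≤ ε) :
    ∑ v, ‖nodeMean a - a v‖ ^ 2 ≤ ε / (η * Fintype.card ι) := by
  have hgaps : 0 ≤ μ * ∑ v, bregmanGap (f v) (p v) x₀ (a v) :=
    mul_nonneg hμ (Finset.sum_nonneg fun v _ => hgap v)
  rw [merit, sum_sum_norm_sub_sq] at ha
  rw [le_div_iff₀ (by positivity)]
  linarith

lemma sum_bregmanGap_le_of_merit_le (hμ : 0 < μ) (hη : 0 ≤ η) (ha : merit f p x₀ μ η a ≤ ε) :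
    ∑ v, bregmanGap (f v) (p v) x₀ (a v) ≤ ε / μ := by
  have hdisagreement : 0 ≤ η / 2 * ∑ u, ∑ v, ‖a u - a v‖ ^ 2 := by positivity
  rw [merit] at ha
  rw [le_div_iff₀ hμ]
  linarith

lemma abs_sum_sub_sum_le_add_sqrt_mul_sqrt (hp : ∑ v, p v = 0)
    (hgap : ∀ v, 0 ≤ bregmanGap (f v) (p v) x₀ (a v)) (c : E) :
    |∑ v, f v (a v) - ∑ v, f v x₀| ≤ ∑ v, bregmanGap (f v) (p v) x₀ (a v)
      + √(∑ v, ‖p v‖ ^ 2) * √(∑ v, ‖c - a v‖ ^ 2) := by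
  have hsplit : ∑ v, f v (a v) - ∑ v, f v x₀
      = ∑ v, bregmanGap (f v) (p v) x₀ (a v) + ∑ v, ⟪p v, a v - x₀⟫_ℝ := by
    simp only [bregmanGap, Finset.sum_sub_distrib]
    ring
  rw [hsplit]
  refine (abs_add_le _ _).trans (add_le_add ?_ (abs_sum_inner_sub_le hp a x₀ c))
  rw [abs_of_nonneg (Finset.sum_nonneg fun v _ => hgap v)]

end Merit

section DAGP

variable {ι E : Type*} [Fintype ι] [NormedAddCommGroup E] [InnerProductSpace ℝ E]

/-- The `n`-th summand of `-A_N`, as a function of the deviations `d = x̃_n`, `d' = x̃_{n+1}` and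
`e = g̃_n`. -/
noncomputable def trailingTerm (W : Matrix ι ι ℝ) (L μ η : ℝ) (d d' e : ι → E) : ℝ :=
  (∑ v, ⟪d' v, d v - (∑ u, W v u • d u) - d' v + μ • e v⟫_ℝ)
    + L * μ / 2 * ∑ v, ‖d' v - d v‖ ^ 2 + η / 2 * ∑ u, ∑ v, ‖d' u - d' v‖ ^ 2

variable [CompleteSpace E] {f : ι → E → ℝ} {f' : ι → E → E} {L μ η : ℝ} {W : Matrix ι ι ℝ}
  {xstar : E}

lemma merit_le_trailingTerm {ν a b g : ι → E} (hμ : 0 ≤ μ)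
    (hconv : ∀ v, ConvexOn ℝ Set.univ (f v)) (hdiff : ∀ v w, HasGradientAt (f v) (f' v w) w)
    (hLip : ∀ v w, ‖f' v w - f' v (a v)‖ ≤ L * ‖w - a v‖) (hW : ∀ v, ∑ u, W v u = 0)
    (hproj : ∀ v,
      ⟪xstar - b v, a v - (∑ u, W v u • a u) - μ • (f' v (a v) - g v) - b v⟫_ℝ ≤ 0) :
    merit f (fun v => ν v + f' v xstar) xstar μ η b ≤
      trailingTerm W L μ η (fun v => a v - xstar) (fun v => b v - xstar)
        (fun v => g v - f' v xstar - ν v) := by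
  simp only [merit, trailingTerm, sub_sub_sub_cancel_right (b _) (b _) xstar, Finset.mul_sum _ _ μ,
    Finset.mul_sum _ _ (L * μ / 2), ← Finset.sum_add_distrib, sum_smul_sub_eq_of_sum_eq_zero (hW _)]
  gcongr with v
  exact mul_bregmanGap_le_of_projection hμ (hconv v) (hdiff v) (hLip v) (hproj v)

lemma merit_timeAverage_le {ν : ι → E} {x g : ℕ → ι → E} {C : ℝ} {N : ℕ} (hμ : 0 ≤ μ) (hη : 0 ≤ η)
    (hconv : ∀ v, ConvexOn ℝ Set.univ (f v)) (hdiff : ∀ v w, HasGradientAt (f v) (f' v w) w)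
    (hLip : ∀ v w w', ‖f' v w - f' v w'‖ ≤ L * ‖w - w'‖) (hW : ∀ v, ∑ u, W v u = 0)
    (hproj : ∀ n v, ⟪xstar - x (n + 1) v, x n v - (∑ u, W v u • x n u)
      - μ • (f' v (x n v) - g n v) - x (n + 1) v⟫_ℝ ≤ 0) (hN : N ≠ 0)
    (hA : ∑ n ∈ Finset.range N, trailingTerm W L μ η (fun v => x n v - xstar)
      (fun v => x (n + 1) v - xstar) (fun v => g n v - f' v xstar - ν v) ≤ C) :
    merit f (fun v => ν v + f' v xstar) xstar μ η (timeAverage x N) ≤ C / N := by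
  set Φ := merit f (fun v => ν v + f' v xstar) xstar μ η
  have hsum : ∑ n ∈ Finset.range N, Φ (x (n + 1)) ≤ C :=
    (Finset.sum_le_sum fun n _ => merit_le_trailingTerm hμ hconv hdiff
      (fun v w => hLip v w _) hW (hproj n)).trans hA
  calc Φ (timeAverage x N) ≤ timeAverage (Φ ∘ x) N :=
        map_timeAverage_le (convexOn_merit hconv hμ hη) hN fun _ => trivial
    _ = (∑ n ∈ Finset.range N, Φ (x (n + 1))) / N := by
        simp only [timeAverage_eq_smul_sum_range, smul_eq_mul, inv_mul_eq_div, Function.comp_apply]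
    _ ≤ C / N := by gcongr

theorem dagp_rate_theorem_general (hconv : ∀ v, ConvexOn ℝ Set.univ (f v))
    (hdiff : ∀ v w, HasGradientAt (f v) (f' v w) w)
    (hLip : ∀ v w w', ‖f' v w - f' v w'‖ ≤ L * ‖w - w'‖)
    {S : ι → Set E} (hS : ∀ v, Convex ℝ (S v)) (hW : ∀ v, ∑ u, W v u = 0)
    (hμ : 0 < μ) (hη : 0 < η) (hxstar : ∀ v, xstar ∈ S v)
    {ν : ι → E} (hν : ∀ v, ∀ y ∈ S v, ⟪ν v, y - xstar⟫_ℝ ≤ 0)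
    (hopt : ∑ v, (ν v + f' v xstar) = 0) {x g z : ℕ → ι → E}
    (hz : ∀ n v, z n v = x n v - (∑ u, W v u • x n u) - μ • (f' v (x n v) - g n v))
    (hxS : ∀ n v, x (n + 1) v ∈ S v)
    (hproj : ∀ n v, ∀ y ∈ S v, ⟪y - x (n + 1) v, z n v - x (n + 1) v⟫_ℝ ≤ 0)
    {C : ℝ} {N : ℕ} (hN : N ≠ 0)
    (hA : ∑ n ∈ Finset.range N, trailingTerm W L μ η (fun v => x n v - xstar)
      (fun v => x (n + 1) v - xstar) (fun v => g n v - f' v xstar - ν v) ≤ C) (v : ι) :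
    ‖nodeMean (timeAverage x N) - timeAverage x N v‖ ^ 2 ≤ C / (η * Fintype.card ι * N) ∧
      Metric.infDist (nodeMean (timeAverage x N)) (S v) ^ 2 ≤ C / (η * Fintype.card ι * N) ∧
      |∑ u, f u (timeAverage x N u) - ∑ u, f u xstar| ≤
        C / (μ * N) + √(∑ u, ‖ν u + f' u xstar‖ ^ 2) * √(C / (η * Fintype.card ι * N)) := by
  have : Nonempty ι := ⟨v⟩
  set xbar := timeAverage x N
  let p : ι → E := fun u => ν u + f' u xstar
  have hmem : ∀ u, xbar u ∈ S u := Set.mem_univ_pi.1 <|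
    timeAverage_mem (convex_pi fun u _ => hS u) hN fun n => Set.mem_univ_pi.2 (hxS n)
  have hgap (u : ι) : 0 ≤ bregmanGap (f u) (p u) xstar (xbar u) :=
    bregmanGap_nonneg (hconv u) (hdiff u xstar) trivial trivial (hν u _ (hmem u))
  have hmerit : merit f p xstar μ η xbar ≤ C / N :=
    merit_timeAverage_le hμ.le hη.le hconv hdiff hLip hW
      (fun n u => hz n u ▸ hproj n u xstar (hxstar u)) hN hA
  have hdev : ∑ u, ‖nodeMean xbar - xbar u‖ ^ 2 ≤ C / (η * Fintype.card ι * N) := by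
    simpa only [div_div, mul_comm (N : ℝ)] using
      sum_norm_nodeMean_sub_sq_le_of_merit_le hμ.le hη hgap hmerit
  have hgaps : ∑ u, bregmanGap (f u) (p u) xstar (xbar u) ≤ C / (μ * N) := by
    simpa only [div_div, mul_comm (N : ℝ)] using sum_bregmanGap_le_of_merit_le hμ hη.le hmerit
  have hconsensus : ‖nodeMean xbar - xbar v‖ ^ 2 ≤ C / (η * Fintype.card ι * N) :=
    (Finset.single_le_sum (f := fun u => ‖nodeMean xbar - xbar u‖ ^ 2)
      (fun _ _ => sq_nonneg _) (Finset.mem_univ v)).trans hdev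
  refine ⟨hconsensus, le_trans ?_ hconsensus, ?_⟩
  · rw [← dist_eq_norm]
    gcongr
    exacts [Metric.infDist_nonneg, Metric.infDist_le_dist_of_mem (hmem v)]
  · refine (abs_sum_sub_sum_le_add_sqrt_mul_sqrt hopt hgap (nodeMean xbar)).trans ?_
    gcongr

end DAGP

/-- Theorem 2 of the paper, in the quantitative form established by
its proof.  Under convexity and `L`-smoothness of the local functions, the DAGP
update-and-projection dynamics, the optimality certificate
`∑_v (n^v + ∇f_v(x*)) = 0`, and the lower bound `A_N ≥ -C` on the trailing quadratic
terms of the master inequality, the averaged iterates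
`x̄^v_N = (1/N) ∑_{n=1}^N x_n^v`, `x̄_N = (1/M) ∑_v x̄^v_N` satisfy the `O(1/N)`
consensus and feasibility rates and the `O(1/√N)` objective rate. -/
theorem dagp_rate_theorem (m M : ℕ) (hM : 0 < M)
    (f : Fin M → EuclideanSpace ℝ (Fin m) → ℝ)
    (f' : Fin M → EuclideanSpace ℝ (Fin m) → EuclideanSpace ℝ (Fin m))
    (hconv : ∀ v, ConvexOn ℝ Set.univ (f v))
    (hdiff : ∀ v w, HasGradientAt (f v) (f' v w) w)
    (L : ℝ) (hLip : ∀ v w w', ‖f' v w - f' v w'‖ ≤ L * ‖w - w'‖)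
    (S : Fin M → Set (EuclideanSpace ℝ (Fin m)))
    (hSne : ∀ v, (S v).Nonempty) (hScl : ∀ v, IsClosed (S v))
    (hScv : ∀ v, Convex ℝ (S v))
    (W : Matrix (Fin M) (Fin M) ℝ) (hWrow : ∀ v, ∑ u, W v u = 0)
    (μ η : ℝ) (hμ : 0 < μ) (hη : 0 < η)
    (xstar : EuclideanSpace ℝ (Fin m)) (hxstar : ∀ v, xstar ∈ S v)
    (nv : Fin M → EuclideanSpace ℝ (Fin m))
    (hnv : ∀ v, ∀ y ∈ S v, ⟪nv v, y - xstar⟫_ℝ ≤ 0)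
    (hopt : ∑ v, (nv v + f' v xstar) = 0)
    (x g z : ℕ → Fin M → EuclideanSpace ℝ (Fin m))
    (hz : ∀ n v, z n v = x n v - (∑ u, W v u • x n u) - μ • (f' v (x n v) - g n v))
    -- `x_{n+1}^v = P_{S_v}(z_n^v)`, via the projection variational characterization
    (hxS : ∀ n v, x (n + 1) v ∈ S v)
    (hproj : ∀ n v, ∀ y ∈ S v, ⟪y - x (n + 1) v, z n v - x (n + 1) v⟫_ℝ ≤ 0)
    (C : ℝ) (hC : 0 ≤ C)
    -- the bound `A_N ≥ -C` for all `N ≥ 1`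
    (hA : ∀ N : ℕ, 1 ≤ N →
      -C ≤ -(∑ n ∈ Finset.range N,
          ((∑ v, ⟪x (n + 1) v - xstar,
                (x n v - xstar) - (∑ u, W v u • (x n u - xstar))
                  - (x (n + 1) v - xstar)
                  + μ • (g n v - f' v xstar - nv v)⟫_ℝ)
            + L * μ / 2 * ∑ v, ‖(x (n + 1) v - xstar) - (x n v - xstar)‖ ^ 2
            + η / 2 * ∑ u, ∑ v,
                ‖(x (n + 1) u - xstar) - (x (n + 1) v - xstar)‖ ^ 2))) :
    ∀ N : ℕ, 1 ≤ N → ∀ v,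
      -- (a) consensus rate
      ‖(M : ℝ)⁻¹ • (∑ u, (N : ℝ)⁻¹ • ∑ n ∈ Finset.Icc 1 N, x n u)
          - (N : ℝ)⁻¹ • ∑ n ∈ Finset.Icc 1 N, x n v‖ ^ 2 ≤ C / (η * M * N) ∧
      -- (b) feasibility rate
      Metric.infDist ((M : ℝ)⁻¹ • ∑ u, (N : ℝ)⁻¹ • ∑ n ∈ Finset.Icc 1 N, x n u)
          (S v) ^ 2 ≤ C / (η * M * N) ∧
      -- (c) objective rate
      |∑ u, f u ((N : ℝ)⁻¹ • ∑ n ∈ Finset.Icc 1 N, x n u) - ∑ u, f u xstar| ≤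
        C / (μ * N) + Real.sqrt (∑ u, ‖nv u + f' u xstar‖ ^ 2) *
          Real.sqrt (C / (η * M * N)) := by
  intro N hN v
  simpa only [nodeMean, timeAverage, Pi.smul_apply, Finset.sum_apply, Fintype.card_fin] using
    dagp_rate_theorem_general hconv hdiff hLip hScv hWrow hμ hη hxstar hnv hopt hz hxS hproj
      (Nat.one_le_iff_ne_zero.1 hN) (neg_le_neg_iff.1 (hA N hN)) v
end
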